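/- Let X and Y be C*-semi-inner product A-modules and T: X → Y a linear map such that there exists K ≥ 0 with [Tx, Tx] ≤ K·[x,x] for all x ∈ X. Then T is bounded with ‖T‖ ≤ K^{1/2} and T is A-linear: T(xa) = (Tx)·a for all x ∈ X, a ∈ A. -/

import Mathlib

/-- A C*-semi-inner product on a right `A`-module `X` (Janfada–Shamsi Gamchi–Niknam). -/
structure CSIP (A : Type*) [CStarAlgebra A] [PartialOrder A] [StarOrderedRing A]
    (X : Type*) [AddCommGroup X] [Module ℂ X] where
  /-- the `A`-valued semi-inner product -/
  ip : X → X → A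
  /-- the right `A`-module action on `X` -/
  rsmul : X → A → X
  rsmul_add_left : ∀ (x y : X) (a : A), rsmul (x + y) a = rsmul x a + rsmul y a
  rsmul_add_right : ∀ (x : X) (a b : A), rsmul x (a + b) = rsmul x a + rsmul x b
  rsmul_mul : ∀ (x : X) (a b : A), rsmul x (a * b) = rsmul (rsmul x a) b
  rsmul_one : ∀ x : X, rsmul x 1 = x
  rsmul_smul_one : ∀ (x : X) (c : ℂ), rsmul x (c • (1 : A)) = c • x
  ip_nonneg : ∀ x, 0 ≤ ip x x
  ip_definite : ∀ x, ip x x = 0 → x = 0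
  ip_add_right : ∀ x y z, ip x (y + z) = ip x y + ip x z
  ip_smul_right : ∀ (c : ℂ) (x y : X), ip x (c • y) = c • ip x y
  ip_rsmul_right : ∀ (x y : X) (a : A), ip x (rsmul y a) = ip x y * a
  ip_rsmul_left : ∀ (x y : X) (a : A), ip (rsmul x a) y = star a * ip x y
  cauchy_schwarz : ∀ x y, ‖ip y x‖ ^ 2 ≤ ‖ip y y‖ * ‖ip x x‖

/-!
Fix `x`, `y` and put `r b = [y, T(xb)]`. Applying the Cauchy–Schwarz inequality to `y` and
`T(xb)c`, and conjugating `[T(xb), T(xb)] ≤ K [xb, xb]` by `c`, gives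
`‖r(b) c‖ ≤ C ‖b c‖`. Hence `z ↦ r(exp (za)) exp (-za)` is entire and bounded by `C ‖1‖`, so it is
constant by Liouville's theorem, and its derivative at `0`, which is `r(a) - r(1)a`, vanishes.
Thus `[y, T(xa)] = [y, Tx] a = [y, (Tx)a]` for every `y`, and definiteness gives the claim.
-/

section BanachAlgebra

open NormedSpace (exp)

theorem exp_mul_exp_neg {A : Type*} [NormedRing A] [NormedAlgebra ℚ A] [CompleteSpace A] (a : A) :
    exp a * exp (-a) = 1 :=
  (NormedSpace.invertibleExp a).mul_invOf_self

variable {A : Type*} [NormedRing A] [NormedAlgebra ℂ A] [CompleteSpace A]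

theorem hasDerivAt_apply_exp_smul_mul_exp_smul_neg (r : A →L[ℂ] A) (a : A) (z : ℂ) :
    HasDerivAt (fun z : ℂ ↦ r (exp (z • a)) * exp (z • -a))
      (r (exp (z • a) * a) * exp (z • -a) + r (exp (z • a)) * (exp (z • -a) * -a)) z :=
  (r.hasFDerivAt.comp_hasDerivAt z (hasDerivAt_exp_smul_const a z)).mul
    (hasDerivAt_exp_smul_const (-a) z)

theorem apply_eq_apply_one_mul_of_norm_apply_mul_le (r : A →ₗ[ℂ] A) (C : ℝ)
    (hr : ∀ b c : A, ‖r b * c‖ ≤ C * ‖b * c‖) (a : A) : r a = r 1 * a := by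
  let R : A →L[ℂ] A := r.mkContinuous C fun b ↦ by simpa only [mul_one] using hr b 1
  let f : ℂ → A := fun z ↦ R (exp (z • a)) * exp (z • -a)
  have hderiv := hasDerivAt_apply_exp_smul_mul_exp_smul_neg R a
  have hmul (z : ℂ) : exp (z • a) * exp (z • -a) = 1 := by
    let : NormedAlgebra ℚ A := NormedAlgebra.restrictScalars ℚ ℂ A
    rw [smul_neg, exp_mul_exp_neg]
  have hbounded : Bornology.IsBounded (Set.range f) := by
    refine isBounded_iff_forall_norm_le.mpr ⟨C * ‖(1 : A)‖, ?_⟩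
    rintro _ ⟨z, rfl⟩
    exact (hr _ _).trans_eq (by rw [hmul])
  have hf : Differentiable ℂ f := fun z ↦ (hderiv z).differentiableAt
  have hconst : f = fun _ ↦ f 0 := funext fun z ↦ hf.apply_eq_apply_of_bounded hbounded z 0
  have hderiv_zero : HasDerivAt f (r a - r 1 * a) 0 := by
    simpa [f, R, sub_eq_add_neg] using hderiv 0
  rw [hconst] at hderiv_zero
  exact sub_eq_zero.mp (hderiv_zero.unique (hasDerivAt_const 0 (f 0)))

end BanachAlgebra

theorem norm_le_norm_mul_norm_of_le_smul {A : Type*} [CStarAlgebra A] [PartialOrder A]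
    [StarOrderedRing A] {a b : A} {K : ℝ} (ha : 0 ≤ a) (h : a ≤ K • b) : ‖a‖ ≤ ‖K‖ * ‖b‖ :=
  (CStarAlgebra.norm_le_norm_of_nonneg_of_le ha h).trans_eq (norm_smul K b)

namespace CSIP

variable {A : Type*} [CStarAlgebra A] [PartialOrder A] [StarOrderedRing A]
  {X Y : Type*} [AddCommGroup X] [Module ℂ X] [AddCommGroup Y] [Module ℂ Y]

theorem rsmul_smul (S : CSIP A X) (x : X) (c : ℂ) (a : A) :
    S.rsmul x (c • a) = c • S.rsmul x a := by
  rw [← S.rsmul_smul_one, ← S.rsmul_mul, mul_smul_comm, mul_one]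

/-- The orbit map `a ↦ xa` of the right action, as a `ℂ`-linear map; it turns a `ℂ`-linear map on
`X` into one on `A`. -/
def rsmulₗ (S : CSIP A X) (x : X) : A →ₗ[ℂ] X where
  toFun := S.rsmul x
  map_add' := S.rsmul_add_right x
  map_smul' := S.rsmul_smul x

/-- The functional `z ↦ [x, z]`, as a `ℂ`-linear map; such functionals separate the points
of `X`. -/
def ipₗ (S : CSIP A X) (x : X) : X →ₗ[ℂ] A where
  toFun := S.ip x
  map_add' := S.ip_add_right x
  map_smul' c := S.ip_smul_right c x

theorem ext_ip (S : CSIP A X) {u v : X} (h : ∀ x, S.ip x u = S.ip x v) : u = v := by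
  refine sub_eq_zero.mp (S.ip_definite _ ?_)
  calc S.ip (u - v) (u - v) = S.ip (u - v) u - S.ip (u - v) v := map_sub (S.ipₗ (u - v)) u v
    _ = 0 := sub_eq_zero.mpr (h _)

theorem ip_rsmul_self (S : CSIP A X) (x : X) (a : A) :
    S.ip (S.rsmul x a) (S.rsmul x a) = star a * S.ip x x * a := by
  rw [S.ip_rsmul_left, S.ip_rsmul_right, mul_assoc]

theorem norm_ip_rsmul_self_le (S : CSIP A X) (x : X) (a : A) :
    ‖S.ip (S.rsmul x a) (S.rsmul x a)‖ ≤ ‖S.ip x x‖ * ‖a‖ ^ 2 :=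
  calc ‖S.ip (S.rsmul x a) (S.rsmul x a)‖ = ‖star a * S.ip x x * a‖ := by rw [S.ip_rsmul_self]
    _ ≤ ‖star a‖ * ‖S.ip x x‖ * ‖a‖ := norm_mul₃_le
    _ = ‖S.ip x x‖ * ‖a‖ ^ 2 := by rw [norm_star]; ring

variable (SX : CSIP A X) (SY : CSIP A Y) {K : ℝ}

theorem ip_rsmul_self_le_of_le {x : X} {y : Y} (h : SY.ip y y ≤ K • SX.ip x x) (a : A) :
    SY.ip (SY.rsmul y a) (SY.rsmul y a) ≤ K • SX.ip (SX.rsmul x a) (SX.rsmul x a) := by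
  rw [SY.ip_rsmul_self, SX.ip_rsmul_self, ← smul_mul_assoc, ← mul_smul_comm]
  exact star_left_conjugate_le_conjugate h a

theorem norm_ip_mul_sq_le_of_le {x : X} {y : Y} (h : SY.ip y y ≤ K • SX.ip x x) (z : Y) (a : A) :
    ‖SY.ip z y * a‖ ^ 2 ≤ ‖SY.ip z z‖ * (‖K‖ * ‖SX.ip (SX.rsmul x a) (SX.rsmul x a)‖) :=
  calc ‖SY.ip z y * a‖ ^ 2 = ‖SY.ip z (SY.rsmul y a)‖ ^ 2 := by rw [SY.ip_rsmul_right]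
    _ ≤ ‖SY.ip z z‖ * ‖SY.ip (SY.rsmul y a) (SY.rsmul y a)‖ := SY.cauchy_schwarz _ z
    _ ≤ ‖SY.ip z z‖ * (‖K‖ * ‖SX.ip (SX.rsmul x a) (SX.rsmul x a)‖) := by
        gcongr
        exact norm_le_norm_mul_norm_of_le_smul (SY.ip_nonneg _) (SX.ip_rsmul_self_le_of_le SY h a)

theorem norm_ip_map_rsmul_mul_le {T : X →ₗ[ℂ] Y}
    (h : ∀ x : X, SY.ip (T x) (T x) ≤ K • SX.ip x x) (x : X) (y : Y) (b c : A) :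
    ‖SY.ip y (T (SX.rsmul x b)) * c‖ ≤ √(‖SY.ip y y‖ * ‖K‖ * ‖SX.ip x x‖) * ‖b * c‖ := by
  have hsq : ‖SY.ip y (T (SX.rsmul x b)) * c‖ ^ 2 ≤
      ‖SY.ip y y‖ * ‖K‖ * ‖SX.ip x x‖ * ‖b * c‖ ^ 2 :=
    calc ‖SY.ip y (T (SX.rsmul x b)) * c‖ ^ 2
      _ ≤ ‖SY.ip y y‖ * (‖K‖ * ‖SX.ip (SX.rsmul x (b * c)) (SX.rsmul x (b * c))‖) := by
          rw [SX.rsmul_mul]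
          exact SX.norm_ip_mul_sq_le_of_le SY (h _) y c
      _ ≤ ‖SY.ip y y‖ * (‖K‖ * (‖SX.ip x x‖ * ‖b * c‖ ^ 2)) := by
          gcongr
          exact SX.norm_ip_rsmul_self_le x (b * c)
      _ = ‖SY.ip y y‖ * ‖K‖ * ‖SX.ip x x‖ * ‖b * c‖ ^ 2 := by ring
  calc ‖SY.ip y (T (SX.rsmul x b)) * c‖
    _ ≤ √(‖SY.ip y y‖ * ‖K‖ * ‖SX.ip x x‖ * ‖b * c‖ ^ 2) := Real.le_sqrt_of_sq_le hsq
    _ = √(‖SY.ip y y‖ * ‖K‖ * ‖SX.ip x x‖) * ‖b * c‖ := by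
        rw [Real.sqrt_mul (by positivity), Real.sqrt_sq (norm_nonneg _)]

theorem map_rsmul_of_ip_map_le {T : X →ₗ[ℂ] Y}
    (h : ∀ x : X, SY.ip (T x) (T x) ≤ K • SX.ip x x) (x : X) (a : A) :
    T (SX.rsmul x a) = SY.rsmul (T x) a := by
  refine SY.ext_ip fun y ↦ ?_
  calc SY.ip y (T (SX.rsmul x a)) = SY.ip y (T (SX.rsmul x 1)) * a :=
        apply_eq_apply_one_mul_of_norm_apply_mul_le (SY.ipₗ y ∘ₗ T ∘ₗ SX.rsmulₗ x) _
          (SX.norm_ip_map_rsmul_mul_le SY h x y) a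
    _ = SY.ip y (SY.rsmul (T x) a) := by rw [SX.rsmul_one, SY.ip_rsmul_right]

end CSIP

theorem stmt11_general (A : Type*) [CStarAlgebra A] [PartialOrder A] [StarOrderedRing A]
    (X Y : Type*) [AddCommGroup X] [Module ℂ X] [AddCommGroup Y] [Module ℂ Y]
    (SX : CSIP A X) (SY : CSIP A Y)
    (T : X →ₗ[ℂ] Y) (K : ℝ) (hK : 0 ≤ K)
    (h : ∀ x : X, SY.ip (T x) (T x) ≤ K • SX.ip x x) :
    (∀ x : X, Real.sqrt ‖SY.ip (T x) (T x)‖ ≤ Real.sqrt K * Real.sqrt ‖SX.ip x x‖) ∧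
    (∀ (x : X) (a : A), T (SX.rsmul x a) = SY.rsmul (T x) a) := by
  refine ⟨fun x ↦ ?_, SX.map_rsmul_of_ip_map_le SY h⟩
  rw [← Real.sqrt_mul hK]
  refine Real.sqrt_le_sqrt ?_
  simpa only [Real.norm_of_nonneg hK] using
    norm_le_norm_mul_norm_of_le_smul (SY.ip_nonneg (T x)) (h x)

/-- If `[Tx,Tx] ≤ K[x,x]` then `T` is bounded with `‖T‖ ≤ K^{1/2}` and `A`-linear. -/
theorem stmt11 (A : Type*) [CStarAlgebra A] [PartialOrder A] [StarOrderedRing A]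
    (X Y : Type*) [AddCommGroup X] [Module ℂ X] [AddCommGroup Y] [Module ℂ Y]
    (SX : CSIP A X) (SY : CSIP A Y)
    (hcsY : ∀ y z : Y, star (SY.ip y z) * SY.ip y z ≤ ‖SY.ip y y‖ • SY.ip z z)
    (T : X →ₗ[ℂ] Y) (K : ℝ) (hK : 0 ≤ K)
    (h : ∀ x : X, SY.ip (T x) (T x) ≤ K • SX.ip x x) :
    (∀ x : X, Real.sqrt ‖SY.ip (T x) (T x)‖ ≤ Real.sqrt K * Real.sqrt ‖SX.ip x x‖) ∧
    (∀ (x : X) (a : A), T (SX.rsmul x a) = SY.rsmul (T x) a) :=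
  stmt11_general A X Y SX SY T K hK h
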